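/- Let P₁ and P₂ be d-DOPs with P₁ ≠ P₂ and let i, j ∈ {1,…,2d} with j ≢ i + d (mod 2d). If relint(e_i(P₁)) ∩ relint(e_j(P₂)) ≠ ∅, then P₁ and P₂ intersect. -/

import Mathlib

open scoped Classical

noncomputable section

/-- A point of the Euclidean plane. -/
abbrev Pt : Type := ℝ × ℝ

/-- Dot product in the plane. -/
def dot2 (a b : Pt) : ℝ := a.1 * b.1 + a.2 * b.2

/-- Clockwise orthogonal rotation `v^⊥` of a vector. -/
def perp2 (w : Pt) : Pt := (w.2, -w.1)

/-- Cross product (determinant) of two plane vectors. -/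
def cross2 (a b : Pt) : ℝ := a.1 * b.2 - a.2 * b.1

/-- The hypotheses on the family of direction-defining vectors `v₁, …, v_d`
(extended to all integer indices by `v_{i+d} = -v_i`, hence `2d`-periodicity):
`d ≥ 2`, `v 1 = (0,1)`, pairwise linear independence of `v₁, …, v_d`,
`v₂, …, v_d` have negative first coordinate, and `v₂, …, v_d`
are ordered by strictly decreasing slope. -/
def DirOK (d : ℕ) (v : ℤ → Pt) : Prop :=
  2 ≤ d ∧
  v 1 = ((0 : ℝ), (1 : ℝ)) ∧
  (∀ i : ℤ, v (i + (d : ℤ)) = -v i) ∧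
  (∀ i j : ℤ, 1 ≤ i → i < j → j ≤ (d : ℤ) → cross2 (v i) (v j) ≠ 0) ∧
  (∀ i : ℤ, 2 ≤ i → i ≤ (d : ℤ) → (v i).1 < 0) ∧
  (∀ i j : ℤ, 2 ≤ i → i < j → j ≤ (d : ℤ) → (v j).2 / (v j).1 < (v i).2 / (v i).1)

/-- The open polygon `P = {x : ⟨x, v_i^⊥⟩ < p_i for all i ∈ {1,…,2d}}`. -/
def DOPset (d : ℕ) (v : ℤ → Pt) (p : ℤ → ℝ) : Set Pt :=
  {x : Pt | ∀ i ∈ Finset.Icc (1 : ℤ) (2 * (d : ℤ)), dot2 x (perp2 (v i)) < p i}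

/-- The edge `e_i(P) = cl(P) ∩ {x : ⟨x, v_i^⊥⟩ = p_i}`. -/
def edgeOf (d : ℕ) (v : ℤ → Pt) (p : ℤ → ℝ) (i : ℤ) : Set Pt :=
  closure (DOPset d v p) ∩ {x : Pt | dot2 x (perp2 (v i)) = p i}

/-- `p` (a `2d`-periodic family of offsets) defines a `d`-DOP: the corresponding open
set is nonempty and bounded, and every constraint is tight (each edge is nonempty). -/
def IsDOP (d : ℕ) (v : ℤ → Pt) (p : ℤ → ℝ) : Prop :=
  (DOPset d v p).Nonempty ∧
  Bornology.IsBounded (DOPset d v p) ∧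
  (∀ i : ℤ, p (i + 2 * (d : ℤ)) = p i) ∧
  ∀ i ∈ Finset.Icc (1 : ℤ) (2 * (d : ℤ)), (edgeOf d v p i).Nonempty

/-- `te` and `he` are the tail and the head of the (possibly degenerate) segment `e`,
oriented along `v i`:  `e = [te, he]` and `he - te` is a nonnegative multiple of `v i`. -/
def IsTH (v : ℤ → Pt) (i : ℤ) (e : Set Pt) (te he : Pt) : Prop :=
  e = segment ℝ te he ∧ ∃ c : ℝ, 0 ≤ c ∧ he - te = c • v i

/-- The pair (tail, head) of the edge `e_i(P)` (chosen by the characterizing property). -/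
def THpair (d : ℕ) (v : ℤ → Pt) (p : ℤ → ℝ) (i : ℤ) : Pt × Pt :=
  if h : ∃ th : Pt × Pt, IsTH v i (edgeOf d v p i) th.1 th.2 then h.choose
  else (0 : Pt × Pt)

/-- The tail `t(e_i(P))` of the edge `e_i(P)`. -/
def tlPt (d : ℕ) (v : ℤ → Pt) (p : ℤ → ℝ) (i : ℤ) : Pt := (THpair d v p i).1

/-- The head `h(e_i(P))` of the edge `e_i(P)`. -/
def hdPt (d : ℕ) (v : ℤ → Pt) (p : ℤ → ℝ) (i : ℤ) : Pt := (THpair d v p i).2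

/-- The relative interior of the edge `e_i(P)`: the segment minus its two endpoints. -/
def relintE (d : ℕ) (v : ℤ → Pt) (p : ℤ → ℝ) (i : ℤ) : Set Pt :=
  segment ℝ (tlPt d v p i) (hdPt d v p i) \ {tlPt d v p i, hdPt d v p i}

/-- A family of `d`-DOPs is independent: members are pairwise distinct (as sets)
and no two of them meet as open sets. -/
def Indep (d : ℕ) (v : ℤ → Pt) (OPT : Set (ℤ → ℝ)) : Prop :=
  ∀ p ∈ OPT, ∀ q ∈ OPT, p ≠ q →
    DOPset d v p ≠ DOPset d v q ∧ DOPset d v p ∩ DOPset d v q = ∅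

/-- `P` sees `P'` with respect to the charging option `(v_i, a)`, where the Boolean
`a = true` stands for the option `h` (head) and `a = false` for `t` (tail):
the edge `e = e_i(P)` is non-degenerate and `(¬a)(e') ∈ relint(e) ∪ {a(e)}`
where `e' = e_{i+d}(P')`. -/
def SeesOpt (d : ℕ) (v : ℤ → Pt) (p p' : ℤ → ℝ) (i : ℤ) (a : Bool) : Prop :=
  tlPt d v p i ≠ hdPt d v p i ∧
  (if a then tlPt d v p' (i + (d : ℤ)) else hdPt d v p' (i + (d : ℤ))) ∈
    relintE d v p i ∪ {if a then hdPt d v p i else tlPt d v p i}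

/-- `P ∈ OPT` is accountable with respect to the charging option `(v_i, a)`. -/
def Accountable (d : ℕ) (v : ℤ → Pt) (OPT : Set (ℤ → ℝ)) (p : ℤ → ℝ) (i : ℤ)
    (a : Bool) : Prop :=
  ∃ p' ∈ OPT, SeesOpt d v p p' i a

/-- Condition (E4): for every `P ∈ OPT` and every non-degenerate edge `e` of `P`,
`relint(e)` meets the boundary of another polygon of `OPT` or the boundary of `C*`. -/
def E4cond (d : ℕ) (v : ℤ → Pt) (OPT : Set (ℤ → ℝ)) (Cstar : Set Pt) : Prop :=
  ∀ p ∈ OPT, ∀ i ∈ Finset.Icc (1 : ℤ) (2 * (d : ℤ)),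
    tlPt d v p i ≠ hdPt d v p i →
    (∃ q ∈ OPT, DOPset d v q ≠ DOPset d v p ∧
      (relintE d v p i ∩ frontier (DOPset d v q)).Nonempty) ∨
    (relintE d v p i ∩ frontier Cstar).Nonempty

/-- A (closed) parallelogram in the plane. -/
def IsParallelogram (C : Set Pt) : Prop :=
  ∃ a u w : Pt, cross2 u w ≠ 0 ∧
    C = (fun st : ℝ × ℝ => a + st.1 • u + st.2 • w) ''
      {st : ℝ × ℝ | st.1 ∈ Set.Icc (0 : ℝ) 1 ∧ st.2 ∈ Set.Icc (0 : ℝ) 1}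

/-- `P` is a corner polygon in `C*`: all of its edges except exactly one are
contained in `∂C*`. -/
def CornerPoly (d : ℕ) (v : ℤ → Pt) (p : ℤ → ℝ) (Cstar : Set Pt) : Prop :=
  ∃ i ∈ Finset.Icc (1 : ℤ) (2 * (d : ℤ)),
    ¬ edgeOf d v p i ⊆ frontier Cstar ∧
    ∀ j ∈ Finset.Icc (1 : ℤ) (2 * (d : ℤ)), j ≠ i → edgeOf d v p j ⊆ frontier Cstar

/-! At a point `x` in the relative interior of an edge, a convex polygon has the whole open
half-plane bounded by that edge as its tangent cone: a direction `u` of the half-plane is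
`a • (z - x)` with `a > 0` and `z` in the polygon, plus a multiple of the edge direction, and
moving along either summand stays inside. Unless the two edges have opposite directions, the two
half-planes share a direction `u`, and `x + s • u` lies in both polygons for small `s > 0`. -/

open Filter Topology Module

section Dual

variable {K E : Type*} [Field K] [LinearOrder K] [IsStrictOrderedRing K] [AddCommGroup E]
  [Module K E] {f g : Dual K E}

theorem exists_neg_and_neg_of_not_sameRay_neg (h : ¬ SameRay K f (-g)) :
    ∃ u, f u < 0 ∧ g u < 0 := by
  by_contra! H
  have hf : f ≠ 0 := fun hf => h (hf ▸ SameRay.zero_left _)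
  obtain ⟨e, he⟩ := LinearMap.surjective hf (-1)
  have hker {k : E} (hk : f k = 0) : g k = 0 := by
    by_contra hgk
    have hgu : g (e - ((g e + 1) / g k) • k) = -1 := by
      rw [map_sub, map_smul, smul_eq_mul, div_mul_cancel₀ _ hgk]
      ring
    have hfu : f (e - ((g e + 1) / g k) • k) = -1 := by
      rw [map_sub, map_smul, hk, smul_zero, sub_zero, he]
    linarith [H _ (hfu.trans_lt neg_one_lt_zero)]
  have hg : -g = g e • f := by
    ext u
    have hu : g (u + f u • e) = 0 := hker (by simp [he])
    simp only [map_add, map_smul, smul_eq_mul, LinearMap.neg_apply, LinearMap.smul_apply] at hu ⊢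
    linarith
  exact h (hg ▸ SameRay.sameRay_nonneg_smul_right f (H e (he.trans_lt neg_one_lt_zero)))

theorem exists_pos_smul_add_smul_eq (hE : finrank K E = 2) {y e u : E} (hy : f y < 0)
    (he : f e = 0) (he₀ : e ≠ 0) (hu : f u < 0) : ∃ a b : K, 0 < a ∧ a • y + b • e = u := by
  have hf : f ≠ 0 := fun hf => by simp [hf] at hy
  have : FiniteDimensional K E := .of_finrank_eq_succ hE
  have hker : finrank K (LinearMap.ker f) = 1 := by
    have := Dual.finrank_ker_add_one_of_ne_zero hf
    omega
  have hmem : u - (f u / f y) • y ∈ LinearMap.ker f := by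
    rw [LinearMap.mem_ker, map_sub, map_smul, smul_eq_mul, div_mul_cancel₀ _ hy.ne, sub_self]
  obtain ⟨b, hb⟩ := exists_smul_eq_of_finrank_eq_one hker
    (x := ⟨e, he⟩) (Subtype.coe_ne_coe.1 he₀) ⟨_, hmem⟩
  have hb' : b • e = u - (f u / f y) • y := congrArg Subtype.val hb
  exact ⟨f u / f y, b, div_pos_of_neg_of_neg hu hy, by rw [hb']; abel⟩

end Dual

section Convex

variable {E : Type*} [AddCommGroup E] [Module ℝ E]

theorem eventually_add_smul_sub_mem_openSegment {x a b : E} (hx : x ∈ openSegment ℝ a b) :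
    ∀ᶠ r : ℝ in 𝓝 0, x + r • (b - a) ∈ openSegment ℝ a b := by
  rw [openSegment_eq_image'] at hx ⊢
  obtain ⟨θ, hθ, rfl⟩ := hx
  have hlim : Tendsto (fun r : ℝ => θ + r) (𝓝 0) (𝓝 θ) :=
    (continuous_const_add θ).tendsto' 0 θ (add_zero θ)
  filter_upwards [hlim (isOpen_Ioo.mem_nhds hθ)] with r hr
  exact ⟨θ + r, hr, by simp only [add_smul, add_assoc]⟩

variable [TopologicalSpace E] [IsTopologicalAddGroup E] [ContinuousConstSMul ℝ E]
  {C : Set E} {x z a b : E}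

theorem eventually_add_smul_add_mem_interior (hC : Convex ℝ C) (ha : a ∈ closure C)
    (hb : b ∈ closure C) (hx : x ∈ openSegment ℝ a b) (hz : z ∈ interior C) {α : ℝ} (β : ℝ)
    (hα : 0 < α) : ∀ᶠ s : ℝ in 𝓝[>] 0, x + s • (α • (z - x) + β • (b - a)) ∈ interior C := by
  have hseg : openSegment ℝ a b ⊆ closure C := hC.closure.openSegment_subset ha hb
  have hzero (γ : ℝ) : Tendsto (fun s : ℝ => 2 * s * γ) (𝓝[>] 0) (𝓝 0) :=
    (Continuous.tendsto' (by fun_prop) 0 0 (by simp)).mono_left nhdsWithin_le_nhds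
  filter_upwards [self_mem_nhdsWithin, (hzero α).eventually_le_const one_pos,
    (hzero β).eventually (eventually_add_smul_sub_mem_openSegment hx)] with s hs hsα hsβ
  have hpos : 0 < 2 * s * α := mul_pos (mul_pos two_pos hs) hα
  have hinner : x + (2 * s * α) • (z - x) ∈ interior C :=
    hC.add_smul_sub_mem_interior' (hseg hx) hz ⟨hpos, hsα⟩
  -- The target is the midpoint of the two moves of double length along `b - a` and towards `z`.
  have hmid := hC.combo_closure_interior_mem_interior (hseg hsβ) hinner
    (a := 1 / 2) (b := 1 / 2) (by norm_num) (by norm_num) (by norm_num)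
  convert hmid using 1
  module

theorem eventually_add_smul_mem_interior_of_finrank_eq_two (hE : finrank ℝ E = 2)
    (hC : Convex ℝ C) (ha : a ∈ closure C) (hb : b ∈ closure C) (hab : a ≠ b)
    (hx : x ∈ openSegment ℝ a b) (hz : z ∈ interior C) {f : Dual ℝ E} {c : ℝ}
    (hfa : f a = c) (hfb : f b = c) (hfz : f z < c) {u : E} (hu : f u < 0) :
    ∀ᶠ s : ℝ in 𝓝[>] 0, x + s • u ∈ interior C := by
  have hfx : f x = c := by
    obtain ⟨θ₁, θ₂, -, -, hθ, rfl⟩ := hx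
    rw [map_add, map_smul, map_smul, hfa, hfb, ← add_smul, hθ, one_smul]
  obtain ⟨α, β, hα, rfl⟩ := exists_pos_smul_add_smul_eq hE (y := z - x) (e := b - a)
    (by rw [map_sub, hfx]; exact sub_neg.2 hfz) (by rw [map_sub, hfa, hfb, sub_self])
    (sub_ne_zero.2 hab.symm) hu
  exact eventually_add_smul_add_mem_interior hC ha hb hx hz β hα

end Convex

section Directions

theorem exists_add_zsmul_mem_Ioc_of_antiperiodic {α β : Type*} [AddCommGroup α] [LinearOrder α]
    [IsOrderedAddMonoid α] [Archimedean α] [SubtractionMonoid β] {f : α → β} {c : α}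
    (hf : Function.Antiperiodic f c) (hc : 0 < c) (x a : α) :
    ∃ m : ℤ, x + m • c ∈ Set.Ioc a (a + c) ∧ (f (x + m • c) = f x ∨ f (x + m • c) = -f x) := by
  obtain ⟨m, hm, -⟩ := existsUnique_add_zsmul_mem_Ioc hc x a
  refine ⟨m, hm, ?_⟩
  rcases m.even_or_odd with heven | hodd
  · exact Or.inl (by rw [hf.add_zsmul_eq, Int.negOnePow_even m heven, Units.val_one, one_zsmul])
  · exact Or.inr (by rw [hf.add_zsmul_eq, Int.negOnePow_odd m hodd, Units.val_neg, Units.val_one,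
      neg_one_zsmul])

theorem cross2_swap (a b : Pt) : cross2 b a = -cross2 a b := by
  simp only [cross2]
  ring

theorem cross2_neg_left (a b : Pt) : cross2 (-a) b = -cross2 a b := by
  simp only [cross2, Prod.fst_neg, Prod.snd_neg]
  ring

theorem cross2_neg_right (a b : Pt) : cross2 a (-b) = -cross2 a b := by
  simp only [cross2, Prod.fst_neg, Prod.snd_neg]
  ring

theorem cross2_eq_zero_of_sameRay {a b : Pt} (h : SameRay ℝ a b) : cross2 a b = 0 := by
  obtain ⟨u, r, s, -, -, -, rfl, rfl⟩ := h.exists_eq_smul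
  simp only [cross2, Prod.smul_fst, Prod.smul_snd, smul_eq_mul]
  ring

namespace DirOK

variable {d : ℕ} {v : ℤ → Pt} {i j : ℤ}

theorem antiperiodic (hv : DirOK d v) : Function.Antiperiodic v d := hv.2.2.1

theorem cross2_ne_zero (hv : DirOK d v) (hij : ¬ (d : ℤ) ∣ j - i) : cross2 (v i) (v j) ≠ 0 := by
  have hd : (0 : ℤ) < d := Nat.cast_pos.2 (two_pos.trans_le hv.1)
  obtain ⟨m, ⟨hr₀, hrd⟩, hr⟩ := exists_add_zsmul_mem_Ioc_of_antiperiodic hv.antiperiodic hd i 0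
  obtain ⟨n, ⟨hs₀, hsd⟩, hs⟩ := exists_add_zsmul_mem_Ioc_of_antiperiodic hv.antiperiodic hd j 0
  rw [zero_add] at hrd hsd
  have hrs : i + m • (d : ℤ) ≠ j + n • (d : ℤ) := by
    intro h
    rw [smul_eq_mul, smul_eq_mul] at h
    exact hij ⟨m - n, by linarith⟩
  have hcross : cross2 (v (i + m • (d : ℤ))) (v (j + n • (d : ℤ))) ≠ 0 := by
    rcases hrs.lt_or_gt with h | h
    · exact hv.2.2.2.1 _ _ hr₀ h hsd
    · rw [cross2_swap, neg_ne_zero]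
      exact hv.2.2.2.1 _ _ hs₀ h hrd
  rcases hr with hr | hr <;> rcases hs with hs | hs <;>
    simpa only [hr, hs, cross2_neg_left, cross2_neg_right, neg_neg, neg_ne_zero] using hcross

theorem ne_zero (hv : DirOK d v) (i : ℤ) : v i ≠ 0 := by
  have hd : ¬ (d : ℤ) ∣ i + 1 - i := by
    rw [add_sub_cancel_left, ← Nat.cast_one, Int.natCast_dvd_natCast, Nat.dvd_one]
    have := hv.1
    omega
  intro h
  exact hv.cross2_ne_zero hd (by simp [h, cross2])

theorem not_sameRay_neg (hv : DirOK d v) (hij : ¬ 2 * (d : ℤ) ∣ j - (i + d)) :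
    ¬ SameRay ℝ (v i) (-v j) := by
  intro h
  by_cases hdvd : (d : ℤ) ∣ j - i
  · obtain ⟨m, hm⟩ := hdvd
    obtain rfl : j = i + m * d := by linarith
    rcases m.even_or_odd' with ⟨n, rfl | rfl⟩
    · have heq : v (i + 2 * n * d) = v i := by
        rw [mul_comm 2 n, mul_assoc]
        exact hv.antiperiodic.periodic_two_mul.int_mul n i
      exact hv.ne_zero i (eq_zero_of_sameRay_self_neg (heq ▸ h))
    · exact hij ⟨n, by ring⟩
  · apply hv.cross2_ne_zero hdvd
    rw [← neg_eq_zero, ← cross2_neg_right]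
    exact cross2_eq_zero_of_sameRay h

end DirOK

end Directions

section Polygon

/-- The linear form `x ↦ ⟨x, w^⊥⟩` whose strict upper bounds define the sides of direction `w` of
a polygon; it is bundled linearly in `w` too, so that it carries rays of directions to rays of
forms. -/
def perpForm : Pt →ₗ[ℝ] Dual ℝ Pt :=
  LinearMap.mk₂ ℝ (fun w x => dot2 x (perp2 w))
    (fun _ _ _ => by simp only [dot2, perp2, Prod.fst_add, Prod.snd_add]; ring)
    (fun _ _ _ => by simp only [dot2, perp2, Prod.smul_fst, Prod.smul_snd, smul_eq_mul]; ring)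
    (fun _ _ _ => by simp only [dot2, Prod.fst_add, Prod.snd_add]; ring)
    (fun _ _ _ => by simp only [dot2, Prod.smul_fst, Prod.smul_snd, smul_eq_mul]; ring)

theorem perpForm_apply (w x : Pt) : perpForm w x = dot2 x (perp2 w) := rfl

theorem perpForm_injective : Function.Injective perpForm := by
  intro w w' h
  have h₁ := LinearMap.congr_fun h (1, 0)
  have h₂ := LinearMap.congr_fun h (0, 1)
  simp only [perpForm_apply, dot2, perp2] at h₁ h₂
  ext <;> linarith

variable {d e : ℕ} {v w : ℤ → Pt} {p q : ℤ → ℝ} {i j : ℤ}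

theorem DOPset_eq_biInter :
    DOPset d v p = ⋂ k ∈ Finset.Icc (1 : ℤ) (2 * (d : ℤ)), {x | perpForm (v k) x < p k} := by
  ext x
  simp only [DOPset, Set.mem_iInter, Set.mem_ofPred_eq, perpForm_apply]

theorem convex_DOPset : Convex ℝ (DOPset d v p) := by
  rw [DOPset_eq_biInter]
  exact convex_iInter₂ fun k _ => convex_halfSpace_lt (perpForm (v k)).isLinear (p k)

theorem isOpen_DOPset : IsOpen (DOPset d v p) := by
  rw [DOPset_eq_biInter]
  exact isOpen_biInter_finset fun k _ =>
    isOpen_lt (perpForm (v k)).continuous_of_finiteDimensional continuous_const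

theorem exists_mem_openSegment_of_mem_relintE {x : Pt} (hx : x ∈ relintE d v p i) :
    ∃ a ∈ edgeOf d v p i, ∃ b ∈ edgeOf d v p i, a ≠ b ∧ x ∈ openSegment ℝ a b := by
  obtain ⟨hseg, hends⟩ := hx
  obtain ⟨hxt, hxh⟩ : x ≠ tlPt d v p i ∧ x ≠ hdPt d v p i := by
    simpa only [Set.mem_insert_iff, Set.mem_singleton_iff, not_or] using hends
  have hne : tlPt d v p i ≠ hdPt d v p i := fun h => hxt <| by
    rwa [← h, segment_same, Set.mem_singleton_iff] at hseg
  have hTH : ∃ th : Pt × Pt, IsTH v i (edgeOf d v p i) th.1 th.2 := by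
    by_contra h
    -- Without endpoints both `tlPt` and `hdPt` take the junk value `0`.
    exact hne (by simp only [tlPt, hdPt, THpair, dif_neg h, Prod.fst_zero, Prod.snd_zero])
  have hedge : edgeOf d v p i = segment ℝ (tlPt d v p i) (hdPt d v p i) := by
    simpa only [tlPt, hdPt, THpair, dif_pos hTH] using hTH.choose_spec.1
  exact ⟨_, hedge ▸ left_mem_segment ℝ _ _, _, hedge ▸ right_mem_segment ℝ _ _, hne,
    mem_openSegment_of_ne_left_right hxt.symm hxh.symm hseg⟩

theorem eventually_add_smul_mem_DOPset (hi : i ∈ Finset.Icc (1 : ℤ) (2 * (d : ℤ)))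
    (hP : (DOPset d v p).Nonempty) {x u : Pt} (hx : x ∈ relintE d v p i)
    (hu : perpForm (v i) u < 0) : ∀ᶠ s : ℝ in 𝓝[>] 0, x + s • u ∈ DOPset d v p := by
  obtain ⟨z, hz⟩ := hP
  obtain ⟨a, ha, b, hb, hab, hxab⟩ := exists_mem_openSegment_of_mem_relintE hx
  rw [← isOpen_DOPset.interior_eq] at hz ⊢
  exact eventually_add_smul_mem_interior_of_finrank_eq_two (by simp) convex_DOPset ha.1 hb.1 hab
    hxab hz (f := perpForm (v i)) ha.2 hb.2 (interior_subset hz i hi) hu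

theorem stmt2_general (hi : i ∈ Finset.Icc (1 : ℤ) (2 * (d : ℤ)))
    (hj : j ∈ Finset.Icc (1 : ℤ) (2 * (e : ℤ))) (hP : (DOPset d v p).Nonempty)
    (hQ : (DOPset e w q).Nonempty) (hvw : ¬ SameRay ℝ (v i) (-w j))
    (hmeet : (relintE d v p i ∩ relintE e w q j).Nonempty) :
    (DOPset d v p ∩ DOPset e w q).Nonempty := by
  obtain ⟨x, hxP, hxQ⟩ := hmeet
  rw [← perpForm_injective.sameRay_map_iff, map_neg] at hvw
  obtain ⟨u, huP, huQ⟩ := exists_neg_and_neg_of_not_sameRay_neg hvw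
  obtain ⟨s, hs⟩ := ((eventually_add_smul_mem_DOPset hi hP hxP huP).and
    (eventually_add_smul_mem_DOPset hj hQ hxQ huQ)).exists
  exact ⟨x + s • u, hs⟩

end Polygon

/-- If `P₁ ≠ P₂` are `d`-DOPs, `i, j ∈ {1,…,2d}` with
`j ≢ i + d (mod 2d)`, and the relative interiors of the edges `e_i(P₁)` and `e_j(P₂)`
meet, then `P₁` and `P₂` intersect (as open sets). -/
theorem stmt2 (d : ℕ) (v : ℤ → Pt) (hv : DirOK d v) (p₁ p₂ : ℤ → ℝ)
    (h₁ : IsDOP d v p₁) (h₂ : IsDOP d v p₂)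
    (hne : DOPset d v p₁ ≠ DOPset d v p₂)
    (i j : ℤ) (hi : i ∈ Finset.Icc (1 : ℤ) (2 * (d : ℤ)))
    (hj : j ∈ Finset.Icc (1 : ℤ) (2 * (d : ℤ)))
    (hmod : ¬ (2 * (d : ℤ)) ∣ (j - (i + (d : ℤ))))
    (hmeet : (relintE d v p₁ i ∩ relintE d v p₂ j).Nonempty) :
    (DOPset d v p₁ ∩ DOPset d v p₂).Nonempty := by
  exact stmt2_general hi hj h₁.1 h₂.1 (hv.not_sameRay_neg hmod) hmeet
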